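/- Let t = 2^i·ℓ + 1 where i ≥ 1 and ℓ ≥ 3 is odd, with ℓ dividing 2^i − 1 and ℓ ≠ 2^i − 1. Then deg(g_t)² > Σ_{P ∈ Sing(g_t)} m_P(g_t)², where the sum is over all singular points P of g_t with coordinates in the algebraic closure of F_2. -/

import Mathlib

open MvPolynomial

/-- The multiplicity of a two-variable polynomial `h` at a point `P = (α, β)`:
the least `m` such that the degree-`m` homogeneous component of `h(x+α, y+β)`
is nonzero. -/
noncomputable def multAt {K : Type*} [CommRing K]
    (h : MvPolynomial (Fin 2) K) (P : K × K) : ℕ :=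
  sInf {m : ℕ | homogeneousComponent m (bind₁ ![X 0 + C P.1, X 1 + C P.2] h) ≠ 0}

/-!
For `t = 2^i ℓ + 1` in characteristic two, `∂f_t/∂y = (y^ℓ + (x + y + 1)^ℓ)^(2^i)`, and similarly
for `∂f_t/∂x`. So at a singular point `(x, y)` of `g_t` all of `x`, `y` and `x + y + 1` are `ℓ`-th
roots of unity, and `f_t` has multiplicity at most `2^i + 1` there, because `∂f_t/∂y` restricted to
the horizontal line through the point vanishes to order at most `2^i`. Each of the lines `x = 1`,
`y = 1`, `x = y` passing through the point lowers the bound for `g_t` by one. Since the number of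
`ℓ`-th roots of unity is odd, their set is not stable under any nonzero translation, so for each
`x ≠ 1` at least one `ℓ`-th root of unity `y` is excluded. The resulting bound for the sum of the
squared multiplicities is below `(2^i ℓ - 2)²` as soon as `2ℓ < 2^i`.
-/

theorem derivation_mem_pow_of_mem_pow_succ {R A : Type*} [CommSemiring R] [CommSemiring A]
    [Algebra R A] (D : Derivation R A A) {I : Ideal A} {n : ℕ} {x : A} (hx : x ∈ I ^ (n + 1)) :
    D x ∈ I ^ n := by
  induction n generalizing x with
  | zero => simp
  | succ n ih =>
    rw [pow_succ'] at hx
    refine Submodule.mul_induction_on hx (fun y hy z hz => ?_) fun y z hy hz => ?_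
    · rw [D.leibniz, smul_eq_mul, smul_eq_mul]
      exact add_mem (pow_succ' I n ▸ Ideal.mul_mem_mul hy (ih hz)) (Ideal.mul_mem_right (D y) _ hz)
    · rw [map_add]
      exact add_mem hy hz

theorem totalDegree_pderiv_le {σ R : Type*} [CommSemiring R] (j : σ) (p : MvPolynomial σ R) :
    (pderiv j p).totalDegree ≤ p.totalDegree - 1 := by
  classical
  conv_lhs => rw [p.as_sum, map_sum]
  refine totalDegree_finsetSum_le fun d hd => ?_
  rw [pderiv_monomial]
  by_cases hdj : d j = 0
  · simp [hdj]
  refine (totalDegree_monomial_le _ _).trans ?_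
  have hdeg : d.degree ≤ p.totalDegree := le_totalDegree hd
  have hle : Finsupp.single j 1 ≤ d := by simpa [Nat.one_le_iff_ne_zero] using hdj
  have hsub : (d - Finsupp.single j 1).degree + 1 = d.degree := by
    conv_rhs => rw [← tsub_add_cancel_of_le hle, map_add, Finsupp.degree_single]
  change (d - Finsupp.single j 1).degree ≤ _
  omega

section PointIdeal

variable {R : Type*} [CommRing R]

/-- The ideal of all polynomials vanishing at the point `P` of the affine plane. -/
noncomputable def pointIdeal (P : R × R) : Ideal (MvPolynomial (Fin 2) R) :=
  RingHom.ker (aeval (R := R) ![P.1, P.2])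

theorem mem_pointIdeal {P : R × R} {p : MvPolynomial (Fin 2) R} :
    p ∈ pointIdeal P ↔ aeval ![P.1, P.2] p = 0 :=
  RingHom.mem_ker

theorem mem_pointIdeal_pow_multAt (h : MvPolynomial (Fin 2) R) (P : R × R) :
    h ∈ pointIdeal P ^ multAt h P := by
  -- The numerals in `multAt` index variables by `ℕ`, so the translate lies in `R[X₀, X₁, X₂, …]`.
  set translate : MvPolynomial ℕ R := bind₁ ![X 0 + C P.1, X 1 + C P.2] h
  have htranslate : translate ∈ idealOfVars ℕ R ^ multAt h P := by
    rw [mem_pow_idealOfVars_iff']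
    intro d hd
    have hcomp : homogeneousComponent d.degree translate = 0 :=
      not_not.mp (Nat.notMem_of_lt_sInf hd)
    simpa [coeff_homogeneousComponent] using congrArg (coeff d) hcomp
  let back : MvPolynomial ℕ R →ₐ[R] MvPolynomial (Fin 2) R :=
    aeval fun n => X (Fin.ofNat 2 n) - C (![P.1, P.2] (Fin.ofNat 2 n))
  have hback : back translate = h := by
    have hcomp : back.comp (bind₁ ![X 0 + C P.1, X 1 + C P.2]) = AlgHom.id R _ := by
      ext j
      fin_cases j <;> simp [back]
    exact DFunLike.congr_fun hcomp h
  have hvars : idealOfVars ℕ R ≤ (pointIdeal P).comap back := by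
    rw [idealOfVars, Ideal.span_le]
    rintro _ ⟨n, rfl⟩
    simp [back, mem_pointIdeal]
  have hmem := Ideal.le_comap_pow back _ (Ideal.pow_right_mono hvars _ htranslate)
  rwa [Ideal.mem_comap, hback] at hmem

/-- Restriction of a plane polynomial to the horizontal line `y = b`, parametrised by `x`. -/
noncomputable def restrictHorizontal (b : R) : MvPolynomial (Fin 2) R →ₐ[R] Polynomial R :=
  aeval ![Polynomial.X, Polynomial.C b]

theorem X_sub_C_pow_dvd_restrictHorizontal {P : R × R} {n : ℕ} {p : MvPolynomial (Fin 2) R}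
    (hp : p ∈ pointIdeal P ^ n) :
    (Polynomial.X - Polynomial.C P.1) ^ n ∣ restrictHorizontal P.2 p := by
  rw [← Ideal.mem_span_singleton, ← Ideal.span_singleton_pow]
  refine Ideal.le_comap_pow (restrictHorizontal P.2) n (Ideal.pow_right_mono ?_ n hp)
  intro r hr
  rw [Ideal.mem_comap, Ideal.mem_span_singleton, Polynomial.dvd_iff_isRoot]
  have heval : (Polynomial.aeval P.1).comp (restrictHorizontal P.2) = aeval ![P.1, P.2] := by
    ext j
    fin_cases j <;> simp [restrictHorizontal]
  simpa [Polynomial.coe_aeval_eq_eval] using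
    (DFunLike.congr_fun heval r).trans (mem_pointIdeal.mp hr)

theorem natDegree_restrictHorizontal_le (b : R) (p : MvPolynomial (Fin 2) R) :
    (restrictHorizontal b p).natDegree ≤ p.totalDegree := by
  rw [← mul_one p.totalDegree]
  refine aeval_natDegree_le p le_rfl _ fun j => ?_
  fin_cases j <;> simp [Polynomial.natDegree_X_le]

end PointIdeal

/-- The polynomial `f_t = x^t + y^t + 1 + (x + y + 1)^t`. -/
noncomputable def apnPolynomial (R : Type*) [CommSemiring R] (t : ℕ) : MvPolynomial (Fin 2) R :=
  X 0 ^ t + X 1 ^ t + 1 + (X 0 + X 1 + 1) ^ t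

theorem pderiv_apnPolynomial {R : Type*} [CommRing R] [CharP R 2] {i : ℕ} (hi : i ≠ 0) (l : ℕ)
    (j : Fin 2) :
    pderiv j (apnPolynomial R (2 ^ i * l + 1)) =
      (X j ^ l + (X 0 + X 1 + 1) ^ l) ^ 2 ^ i := by
  have ht : ((2 ^ i * l + 1 : ℕ) : MvPolynomial (Fin 2) R) = 1 := by
    simp [CharTwo.two_eq_zero, hi]
  rw [add_pow_char_pow, ← pow_mul, ← pow_mul, mul_comm l]
  fin_cases j <;>
    simp [apnPolynomial, Derivation.leibniz_pow, ht, pderiv_X]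

section Multiplicity

variable {R : Type*} [CommRing R] [IsDomain R] [CharP R 2] {i l : ℕ} {P : R × R}

theorem pow_eq_one_of_apnPolynomial_mem_sq (hi : i ≠ 0)
    (hf : apnPolynomial R (2 ^ i * l + 1) ∈ pointIdeal P ^ 2) :
    P.1 ^ l = 1 ∧ P.2 ^ l = 1 ∧ (P.1 + P.2 + 1) ^ l = 1 := by
  have hpderiv (j : Fin 2) : ![P.1, P.2] j ^ l = (P.1 + P.2 + 1) ^ l := by
    have hmem := derivation_mem_pow_of_mem_pow_succ (n := 1) (pderiv j) hf
    rw [pderiv_apnPolynomial hi, pow_one, mem_pointIdeal, map_pow] at hmem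
    simpa [CharTwo.add_eq_zero] using eq_zero_of_pow_eq_zero hmem
  have hx : P.1 ^ l = (P.1 + P.2 + 1) ^ l := hpderiv 0
  have hy : P.2 ^ l = (P.1 + P.2 + 1) ^ l := hpderiv 1
  set z := P.1 + P.2 + 1 with hz
  have hsum : P.1 + P.2 + z = 1 := by
    rw [hz, ← add_assoc, CharTwo.add_self_eq_zero, zero_add]
  have hvalue : P.1 ^ (2 ^ i * l + 1) + P.2 ^ (2 ^ i * l + 1) + 1 + z ^ (2 ^ i * l + 1) = 0 := by
    simpa [apnPolynomial] using mem_pointIdeal.mp (Ideal.pow_le_self two_ne_zero hf)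
  have hz1 : z ^ l = 1 := by
    apply iterateFrobenius_inj R 2 i
    rw [map_one, iterateFrobenius_def, ← CharTwo.add_eq_zero]
    simp only [pow_succ, mul_comm (2 ^ i), pow_mul, hx, hy] at hvalue
    linear_combination hvalue - (z ^ l) ^ 2 ^ i * hsum
  exact ⟨hx.trans hz1, hy.trans hz1, hz1⟩

-- On the line `y = b` through `P = (a, b)` the derivative `f_y` is the `2 ^ i`-th power of
-- `b ^ l + (x + b + 1) ^ l`, which has at most a simple zero at `a`.
theorem apnPolynomial_notMem_pointIdeal_pow (hi : i ≠ 0) (hl : Odd l) (hP : P.1 + P.2 + 1 ≠ 0) :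
    apnPolynomial R (2 ^ i * l + 1) ∉ pointIdeal P ^ (2 ^ i + 2) := by
  intro hf
  set H : Polynomial R := Polynomial.C P.2 ^ l + (Polynomial.X + Polynomial.C P.2 + 1) ^ l with hH
  have hderiv : H.derivative.eval P.1 ≠ 0 := by
    have hl2 : (l : R) ≠ 0 := by
      rw [Ne, CharP.cast_eq_zero_iff R 2]
      exact hl.not_two_dvd_nat
    simp [hH, Polynomial.derivative_pow, hl2, hP]
  have hdvd : (Polynomial.X - Polynomial.C P.1) ^ (2 ^ i + 1) ∣ H ^ 2 ^ i := by
    have h := X_sub_C_pow_dvd_restrictHorizontal (derivation_mem_pow_of_mem_pow_succ (pderiv 1) hf)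
    rw [pderiv_apnPolynomial hi] at h
    simpa [restrictHorizontal] using h
  have hsq : ¬ (Polynomial.X - Polynomial.C P.1) ^ 2 ∣ H := fun h =>
    hderiv <| Polynomial.dvd_iff_isRoot.mp <| by
      simpa using Polynomial.pow_sub_one_dvd_derivative_of_pow_dvd h
  have hprime := Polynomial.prime_X_sub_C P.1
  exact hprime.not_dvd_one <| hprime.dvd_of_pow_dvd_pow_mul_pow_of_square_not_dvd
    (by simpa using hdvd) hsq

end Multiplicity

theorem le_totalDegree_apnPolynomial {R : Type*} [CommRing R] [IsDomain R] [CharP R 2] {i l : ℕ}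
    (hi : i ≠ 0) (hl : l ≠ 0) : 2 ^ i * l + 1 ≤ (apnPolynomial R (2 ^ i * l + 1)).totalDegree := by
  have hrestrict : restrictHorizontal 0 (pderiv 1 (apnPolynomial R (2 ^ i * l + 1))) =
      (Polynomial.X + Polynomial.C 1) ^ (2 ^ i * l) := by
    rw [pderiv_apnPolynomial hi, mul_comm (2 ^ i), pow_mul]
    simp [restrictHorizontal, hl]
  have hdeg := (natDegree_restrictHorizontal_le 0 _).trans (totalDegree_pderiv_le 1
    (apnPolynomial R (2 ^ i * l + 1)))
  rw [hrestrict, Polynomial.natDegree_pow, Polynomial.natDegree_X_add_C, mul_one] at hdeg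
  have : 0 < 2 ^ i * l := by positivity
  omega

/-- The number of lines among `x = 1`, `y = 1` and `x = y` that pass through the point `P`. -/
def lineCount {R : Type*} [One R] [DecidableEq R] (P : R × R) : ℕ :=
  (if P.1 = 1 then 1 else 0) + (if P.2 = 1 then 1 else 0) + (if P.1 = P.2 then 1 else 0)

section LineCount

variable {R : Type*} [CommRing R] [CharP R 2] [DecidableEq R]

theorem lines_mem_pointIdeal_pow_lineCount (P : R × R) :
    (X 0 + 1) * (X 1 + 1) * (X 0 + X 1) ∈ pointIdeal P ^ lineCount P := by
  have hline (p : MvPolynomial (Fin 2) R) (c : Prop) [Decidable c] (hp : c → p ∈ pointIdeal P) :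
      p ∈ pointIdeal P ^ (if c then 1 else 0) := by
    split_ifs with hc
    · simpa using hp hc
    · simp
  rw [lineCount, pow_add, pow_add]
  refine Ideal.mul_mem_mul (Ideal.mul_mem_mul (hline _ _ ?_) (hline _ _ ?_)) (hline _ _ ?_) <;>
    simp +contextual [mem_pointIdeal, CharTwo.add_self_eq_zero]

theorem multAt_add_lineCount_le [IsDomain R] {i l : ℕ} (hi : i ≠ 0) (hl : Odd l)
    {g : MvPolynomial (Fin 2) R}
    (hg : (X 0 + 1) * (X 1 + 1) * (X 0 + X 1) * g = apnPolynomial R (2 ^ i * l + 1))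
    {P : R × R} (hP : P.1 + P.2 + 1 ≠ 0) :
    multAt g P + lineCount P ≤ 2 ^ i + 1 := by
  by_contra! hlt
  refine apnPolynomial_notMem_pointIdeal_pow hi hl hP (Ideal.pow_le_pow_right hlt ?_)
  rw [← hg, add_comm, pow_add]
  exact Ideal.mul_mem_mul (lines_mem_pointIdeal_pow_lineCount P) (mem_pointIdeal_pow_multAt g P)

end LineCount

theorem exists_add_notMem_of_odd_card {G : Type*} [AddGroup G] {S : Finset G} (hS : Odd S.card)
    {c : G} (hc : c ≠ 0) (hcc : c + c = 0) : ∃ x ∈ S, x + c ∉ S := by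
  by_contra! hmem
  have hsum : ∑ _ ∈ S, (1 : ZMod 2) = 0 :=
    Finset.sum_involution (fun x _ => x + c) (fun _ _ => by decide)
      (fun x _ _ => by simpa using hc) hmem fun x _ => by simp [add_assoc, hcc]
  rw [Finset.sum_const, nsmul_one, ZMod.natCast_eq_zero_iff_even] at hsum
  exact Nat.not_even_iff_odd.mpr hS hsum

theorem card_nthRootsFinset_one_dvd {R : Type*} [CommRing R] [IsDomain R] (n : ℕ) [NeZero n] :
    (Polynomial.nthRootsFinset n (1 : R)).card ∣ n := by
  classical
  have hcard : (Polynomial.nthRootsFinset n (1 : R)).card = Nat.card (rootsOfUnity n R) := by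
    rw [Nat.card_congr (rootsOfUnityEquivNthRoots R n), Nat.card_eq_fintype_card]
    exact (Fintype.card_of_subtype _ fun x => by simp [Polynomial.nthRootsFinset_def]).symm
  rw [hcard, ← IsCyclic.exponent_eq_card]
  exact Monoid.exponent_dvd_of_forall_pow_eq_one fun ζ => Subtype.ext ζ.2

theorem sum_sq_sub_lineCount_row_one_le {R : Type*} [One R] [DecidableEq R]
    {S : Finset R} (q : ℕ) (h1 : 1 ∈ S) :
    ∑ y ∈ S, (q + 1 - lineCount (1, y)) ^ 2 ≤ (q - 2) ^ 2 + (S.card - 1) * q ^ 2 := by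
  rw [← Finset.add_sum_erase S _ h1, ← Finset.card_erase_of_mem h1, ← smul_eq_mul]
  refine add_le_add (by simp [lineCount]) (Finset.sum_le_card_nsmul _ _ _ fun y hy => ?_)
  have hy1 := Finset.ne_of_mem_erase hy
  simp [lineCount, hy1, hy1.symm]

section Counting

variable {R : Type*} [CommRing R] [CharP R 2] [DecidableEq R] {S : Finset R}

theorem sum_sq_sub_lineCount_row_le (q : ℕ) (hS : Odd S.card) (h1 : 1 ∈ S) {x : R} (hx : x ∈ S)
    (hx1 : x ≠ 1) :
    ∑ y ∈ S with x + y + 1 ∈ S, (q + 1 - lineCount (x, y)) ^ 2 ≤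
      2 * q ^ 2 + (S.card - 3) * (q + 1) ^ 2 := by
  set T := S.filter fun y => x + y + 1 ∈ S with hT
  have hcardT : T.card < S.card := by
    obtain ⟨y, hyS, hy⟩ := exists_add_notMem_of_odd_card hS
      (mt CharTwo.add_eq_zero.mp hx1) (CharTwo.add_self_eq_zero (x + 1))
    refine Finset.card_lt_card (Finset.filter_ssubset.mpr ⟨y, hyS, ?_⟩)
    rwa [add_right_comm, add_comm]
  have h1T : 1 ∈ T := by
    simp [hT, h1, hx, add_assoc, CharTwo.add_self_eq_zero]
  have hxT : x ∈ T.erase 1 := by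
    simp [hT, h1, hx, hx1, CharTwo.add_self_eq_zero]
  have hcard : ((T.erase 1).erase x).card ≤ S.card - 3 := by
    rw [Finset.card_erase_of_mem hxT, Finset.card_erase_of_mem h1T]
    omega
  have hgeneric : ∑ y ∈ (T.erase 1).erase x, (q + 1 - lineCount (x, y)) ^ 2 ≤
      (S.card - 3) * (q + 1) ^ 2 :=
    (Finset.sum_le_card_nsmul _ _ ((q + 1) ^ 2) fun y _ => by gcongr; omega).trans
      (Nat.mul_le_mul_right _ hcard)
  rw [← Finset.add_sum_erase T _ h1T, ← Finset.add_sum_erase _ _ hxT, ← add_assoc]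
  refine add_le_add ?_ hgeneric
  simp [lineCount, hx1, two_mul]

theorem sum_sq_sub_lineCount_le (q : ℕ) (hS : Odd S.card) (h1 : 1 ∈ S) :
    ∑ P ∈ S ×ˢ S with P.1 + P.2 + 1 ∈ S, (q + 1 - lineCount P) ^ 2 ≤
      (q - 2) ^ 2 + (S.card - 1) * q ^ 2 +
        (S.card - 1) * (2 * q ^ 2 + (S.card - 3) * (q + 1) ^ 2) := by
  rw [Finset.sum_filter, Finset.sum_product]
  simp only [← Finset.sum_filter]
  rw [← Finset.add_sum_erase S _ h1]
  refine add_le_add ?_ ?_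
  · exact (Finset.sum_le_sum_of_subset (Finset.filter_subset _ _)).trans
      (sum_sq_sub_lineCount_row_one_le q h1)
  · rw [← Finset.card_erase_of_mem h1, ← smul_eq_mul (S.erase 1).card]
    exact Finset.sum_le_card_nsmul _ _ _ fun x hx => sum_sq_sub_lineCount_row_le q hS h1
      (Finset.mem_of_mem_erase hx) (Finset.ne_of_mem_erase hx)

end Counting

theorem multiplicity_bound_lt_sq {q l : ℕ} (hl : 3 ≤ l) (hq : 2 * l < q) :
    (q - 2) ^ 2 + (l - 1) * q ^ 2 + (l - 1) * (2 * q ^ 2 + (l - 3) * (q + 1) ^ 2) <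
      (q * l - 2) ^ 2 := by
  have hql : 2 ≤ q * l := by nlinarith
  zify [show 2 ≤ q by omega, show 1 ≤ l by omega, hl, hql]
  have hdiff : ((q * l - 2) ^ 2 - ((q - 2) ^ 2 + (l - 1) * q ^ 2 +
      (l - 1) * (2 * q ^ 2 + (l - 3) * (q + 1) ^ 2)) : ℤ) =
      (l - 1) * (q * (q - 2 * l) + 2 * (q - l) + l + 3) := by
    ring
  have hl' : (3 : ℤ) ≤ l := by exact_mod_cast hl
  have hq' : (2 * l : ℤ) < q := by exact_mod_cast hq
  have hpos : (0 : ℤ) < (l - 1) * (q * (q - 2 * l) + 2 * (q - l) + l + 3) := by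
    apply mul_pos <;> nlinarith [hl', hq']
  rwa [← sub_pos, hdiff]

section Curve

variable {R : Type*} [CommRing R] [IsDomain R] [CharP R 2] {i l : ℕ} {g : MvPolynomial (Fin 2) R}

theorem pow_eq_one_of_two_le_multAt (hi : i ≠ 0)
    (hg : (X 0 + 1) * (X 1 + 1) * (X 0 + X 1) * g = apnPolynomial R (2 ^ i * l + 1)) {P : R × R}
    (hP : 2 ≤ multAt g P) : P.1 ^ l = 1 ∧ P.2 ^ l = 1 ∧ (P.1 + P.2 + 1) ^ l = 1 :=
  pow_eq_one_of_apnPolynomial_mem_sq hi <| hg ▸ Ideal.mul_mem_left _ _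
    (Ideal.pow_le_pow_right hP (mem_pointIdeal_pow_multAt g P))

theorem sub_two_le_totalDegree (hi : i ≠ 0) (hl : l ≠ 0)
    (hg : (X 0 + 1) * (X 1 + 1) * (X 0 + X 1) * g = apnPolynomial R (2 ^ i * l + 1)) :
    2 ^ i * l - 2 ≤ g.totalDegree := by
  have hlines : ((X 0 + 1) * (X 1 + 1) * (X 0 + X 1) : MvPolynomial (Fin 2) R).totalDegree ≤
      1 + 1 + 1 :=
    (totalDegree_mul _ _).trans <| add_le_add ((totalDegree_mul _ _).trans <| add_le_add
      ((totalDegree_add _ _).trans (by simp)) ((totalDegree_add _ _).trans (by simp)))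
      ((totalDegree_add _ _).trans (by simp))
  have hdeg := le_totalDegree_apnPolynomial (R := R) hi hl
  have hmul := totalDegree_mul ((X 0 + 1) * (X 1 + 1) * (X 0 + X 1)) g
  rw [hg] at hmul
  omega

theorem sum_sq_multAt_le (hi : i ≠ 0) (hl : Odd l)
    (hg : (X 0 + 1) * (X 1 + 1) * (X 0 + X 1) * g = apnPolynomial R (2 ^ i * l + 1))
    (s : Finset (R × R)) (hs : ∀ P ∈ s, 2 ≤ multAt g P) :
    ∑ P ∈ s, multAt g P ^ 2 ≤ (2 ^ i - 2) ^ 2 + (l - 1) * (2 ^ i) ^ 2 +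
      (l - 1) * (2 * (2 ^ i) ^ 2 + (l - 3) * (2 ^ i + 1) ^ 2) := by
  classical
  have : NeZero l := ⟨hl.pos.ne'⟩
  set S := Polynomial.nthRootsFinset l (1 : R)
  have hmem (x : R) : x ∈ S ↔ x ^ l = 1 := Polynomial.mem_nthRootsFinset hl.pos 1
  have hcard : S.card ∣ l := card_nthRootsFinset_one_dvd l
  have hcard_le : S.card ≤ l := Nat.le_of_dvd hl.pos hcard
  have hroots (P) (hP : P ∈ s) := pow_eq_one_of_two_le_multAt hi hg (hs P hP)
  calc ∑ P ∈ s, multAt g P ^ 2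
    _ ≤ ∑ P ∈ s, (2 ^ i + 1 - lineCount P) ^ 2 := by
      gcongr with P hP
      refine Nat.le_sub_of_add_le (multAt_add_lineCount_le hi hl hg ?_)
      exact (IsUnit.of_pow_eq_one (hroots P hP).2.2 this.out).ne_zero
    _ ≤ ∑ P ∈ S ×ˢ S with P.1 + P.2 + 1 ∈ S, (2 ^ i + 1 - lineCount P) ^ 2 := by
      refine Finset.sum_le_sum_of_subset fun P hP => ?_
      simpa [hmem, and_assoc] using hroots P hP
    _ ≤ _ := sum_sq_sub_lineCount_le _ (hl.of_dvd_nat hcard) ((hmem 1).mpr (one_pow l))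
    _ ≤ _ := by gcongr

end Curve

theorem stmt_15_general {R : Type*} [CommRing R] [IsDomain R] [CharP R 2] {i l : ℕ}
    (hl : 3 ≤ l) (hlodd : Odd l) (hli : 2 * l < 2 ^ i) {g : MvPolynomial (Fin 2) R}
    (hg : (X 0 + 1) * (X 1 + 1) * (X 0 + X 1) * g = apnPolynomial R (2 ^ i * l + 1))
    (s : Finset (R × R)) (hs : ∀ P ∈ s, 2 ≤ multAt g P) :
    ∑ P ∈ s, multAt g P ^ 2 < g.totalDegree ^ 2 := by
  classical
  have hi : i ≠ 0 := by
    rintro rfl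
    omega
  calc ∑ P ∈ s, multAt g P ^ 2
    _ ≤ _ := sum_sq_multAt_le hi hlodd hg s hs
    _ < (2 ^ i * l - 2) ^ 2 := multiplicity_bound_lt_sq hl hli
    _ ≤ g.totalDegree ^ 2 := by
      gcongr
      exact sub_two_le_totalDegree hi (by omega) hg

theorem two_mul_le_of_dvd_of_ne {a b : ℕ} (hb : b ≠ 0) (hdvd : a ∣ b) (hne : a ≠ b) :
    2 * a ≤ b := by
  obtain ⟨k, rfl⟩ := hdvd
  have hk : 2 ≤ k := by
    by_contra! hk
    interval_cases k <;> simp at hb hne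
  rw [mul_comm]
  exact Nat.mul_le_mul_left a hk

theorem totalDegree_map_of_injective {σ R S : Type*} [CommSemiring R] [CommSemiring S]
    {φ : R →+* S} (hφ : Function.Injective φ) (p : MvPolynomial σ R) :
    (MvPolynomial.map φ p).totalDegree = p.totalDegree := by
  rw [totalDegree, totalDegree, support_map_of_injective p hφ]

/-- If `t = 2^i ℓ + 1` with `ℓ ∣ 2^i - 1` and `ℓ ≠ 2^i - 1`, then
`deg(g_t)² > Σ_{P ∈ Sing(g_t)} m_P(g_t)²`, the sum being over the singular points of
`g_t` over the algebraic closure of `𝔽₂`. -/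
theorem stmt_15 (i l t : ℕ) (hi : 1 ≤ i) (hl : 3 ≤ l) (hlodd : Odd l)
    (ht : t = 2 ^ i * l + 1) (hdvd : l ∣ 2 ^ i - 1) (hne : l ≠ 2 ^ i - 1)
    (g : MvPolynomial (Fin 2) (ZMod 2))
    (hg : (X 0 + 1) * (X 1 + 1) * (X 0 + X 1) * g =
      X 0 ^ t + X 1 ^ t + 1 + (X 0 + X 1 + 1) ^ t)
    (gbar : MvPolynomial (Fin 2) (AlgebraicClosure (ZMod 2)))
    (hgbar : gbar = MvPolynomial.map (algebraMap (ZMod 2) (AlgebraicClosure (ZMod 2))) g)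
    (hfin : {P : AlgebraicClosure (ZMod 2) × AlgebraicClosure (ZMod 2) |
      2 ≤ multAt gbar P}.Finite) :
    ∑ P ∈ hfin.toFinset, (multAt gbar P) ^ 2 < g.totalDegree ^ 2 := by
  let ι := algebraMap (ZMod 2) (AlgebraicClosure (ZMod 2))
  have : CharP (AlgebraicClosure (ZMod 2)) 2 := charP_of_injective_algebraMap ι.injective 2
  have hli : 2 * l < 2 ^ i := by
    have hpow : 2 ≤ 2 ^ i := Nat.le_pow hi
    have := two_mul_le_of_dvd_of_ne (by omega) hdvd hne
    omega
  have hgbar_mul : (X 0 + 1) * (X 1 + 1) * (X 0 + X 1) * gbar =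
      apnPolynomial (AlgebraicClosure (ZMod 2)) (2 ^ i * l + 1) := by
    simpa [hgbar, ht, apnPolynomial] using congrArg (MvPolynomial.map ι) hg
  rw [← totalDegree_map_of_injective ι.injective g, ← hgbar]
  exact stmt_15_general hl hlodd hli hgbar_mul _ fun P hP => by simpa using hP
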